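/- Let n ≥ 1 and let ρ : Fin (n+1) → Fin (n+1) → ℝ be symmetric with ρ(i,i) = 0 and with 1 ≤ ρ(i,j) ≤ 1 + 1/(n+1) for all i ≠ j. Then there exist points q_0, …, q_n in Euclidean space ℝ^n with ‖q_i − q_j‖ = ρ(i,j) for all i, j; moreover, any points q_0, …, q_n in ℝ^n realizing these distances are affinely independent. -/

import Mathlib

/-!
If `D i j = ρ i j ^ 2`, then points realizing `ρ` satisfy
`∑ i, ∑ j, x i * x j * D i j = -2 * ‖∑ i, x i • q i‖ ^ 2` whenever `∑ i, x i = 0`. Hence a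
realization forces `D` to be negative semidefinite on the hyperplane `∑ i, x i = 0`; conversely
(Schoenberg) this suffices for a realization, and definiteness on the hyperplane makes every
realization affinely independent.

When the off-diagonal entries of `D` are within `h` of a constant `c`, write
`D = c • (J - 1) + A` with `J` the all-ones matrix. On the hyperplane `J` vanishes, `-c • 1`
contributes `-c`, and `A` contributes at most `(N - 1) * h` for `N` points, so `(N - 1) * h < c`
is enough. For `ρ` between `a` and `b`, the choice `c = (a ^ 2 + b ^ 2) / 2`,
`h = (b ^ 2 - a ^ 2) / 2` turns this into `(N - 2) * b ^ 2 < N * a ^ 2`.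
-/

open Matrix Module

section NegativeType

variable {ι : Type*} [Fintype ι]

/-- A matrix of squared distances has *negative type* if its quadratic form is nonpositive on
vectors with coordinate sum zero. -/
def HasNegativeType (D : Matrix ι ι ℝ) : Prop :=
  ∀ x : ι → ℝ, ∑ i, x i = 0 → x ⬝ᵥ D *ᵥ x ≤ 0

/-- A matrix of squared distances has *strict negative type* if its quadratic form is negative on
nonzero vectors with coordinate sum zero. -/
def HasStrictNegativeType (D : Matrix ι ι ℝ) : Prop :=
  ∀ x : ι → ℝ, ∑ i, x i = 0 → x ≠ 0 → x ⬝ᵥ D *ᵥ x < 0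

theorem HasStrictNegativeType.hasNegativeType {D : Matrix ι ι ℝ} (hD : HasStrictNegativeType D) :
    HasNegativeType D := by
  intro x hx
  obtain rfl | hx0 := eq_or_ne x 0
  · simp
  · exact (hD x hx hx0).le

theorem dotProduct_mulVec_self_eq_sum (A : Matrix ι ι ℝ) (x : ι → ℝ) :
    x ⬝ᵥ A *ᵥ x = ∑ i, ∑ j, x i * x j * A i j := by
  simp only [dotProduct, mulVec, Finset.mul_sum]
  exact Finset.sum_congr rfl fun i _ ↦ Finset.sum_congr rfl fun j _ ↦ by ring

theorem dotProduct_mulVec_self_le_of_abs_le {A : Matrix ι ι ℝ} {h : ℝ}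
    (hdiag : ∀ i, A i i = 0) (hoff : ∀ i j, i ≠ j → |A i j| ≤ h) (x : ι → ℝ) :
    x ⬝ᵥ A *ᵥ x ≤ (Fintype.card ι - 1) * h * (x ⬝ᵥ x) := by
  classical
  have hterm (i j : ι) :
      x i * x j * A i j ≤ h * (x i ^ 2 + x j ^ 2) / 2 - if i = j then h * x i ^ 2 else 0 := by
    split_ifs with hij
    · subst hij
      rw [hdiag]
      linarith
    · obtain ⟨hlo, hhi⟩ := abs_le.mp (hoff i j hij)
      nlinarith [sq_nonneg (x i - x j), sq_nonneg (x i + x j)]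
  calc x ⬝ᵥ A *ᵥ x
      = ∑ i, ∑ j, x i * x j * A i j := dotProduct_mulVec_self_eq_sum A x
    _ ≤ ∑ i, ∑ j, (h * (x i ^ 2 + x j ^ 2) / 2 - if i = j then h * x i ^ 2 else 0) := by
      gcongr with i _ j _
      exact hterm i j
    _ = (Fintype.card ι - 1) * h * (x ⬝ᵥ x) := by
      simp only [Finset.sum_sub_distrib, ← Finset.sum_div, ← Finset.mul_sum,
        Finset.sum_add_distrib, Finset.sum_const, Finset.sum_ite_eq, Finset.mem_univ, if_true,
        Finset.card_univ, nsmul_eq_mul, dotProduct, ← sq]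
      ring

theorem hasStrictNegativeType_of_abs_sub_le {D : Matrix ι ι ℝ} {c h : ℝ}
    (hdiag : ∀ i, D i i = 0) (hoff : ∀ i j, i ≠ j → |D i j - c| ≤ h)
    (hch : (Fintype.card ι - 1) * h < c) : HasStrictNegativeType D := by
  classical
  intro x hx hx0
  let A : Matrix ι ι ℝ := D - c • (of 1 - 1)
  have hA : x ⬝ᵥ A *ᵥ x = x ⬝ᵥ D *ᵥ x + c * (x ⬝ᵥ x) := by
    have hJ : (of 1 : Matrix ι ι ℝ) *ᵥ x = 0 := by
      ext i
      simpa [mulVec, dotProduct] using hx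
    simp [A, sub_mulVec, smul_mulVec, hJ]
  have hA_le : x ⬝ᵥ A *ᵥ x ≤ (Fintype.card ι - 1) * h * (x ⬝ᵥ x) := by
    refine dotProduct_mulVec_self_le_of_abs_le (fun i ↦ ?_) (fun i j hij ↦ ?_) x
    · simp [A, hdiag]
    · simpa [A, one_apply_ne hij] using hoff i j hij
  have hxx : 0 < x ⬝ᵥ x := by simpa using dotProduct_star_self_pos_iff.mpr hx0
  linarith [mul_lt_mul_of_pos_right hch hxx]

/-- The Gram matrix, relative to the base point `o`, of points with squared distance matrix `D`,
obtained by the polarization identity. The term `D o o`, which is zero for distances, makes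
`dotProduct_gramOfSqDist_mulVec` hold for every matrix. -/
noncomputable def gramOfSqDist (D : Matrix ι ι ℝ) (o : ι) : Matrix ι ι ℝ :=
  of fun i j ↦ (D i o + D o j - D i j - D o o) / 2

theorem dotProduct_gramOfSqDist_mulVec [DecidableEq ι] (D : Matrix ι ι ℝ) (o : ι) (x : ι → ℝ) :
    x ⬝ᵥ gramOfSqDist D o *ᵥ x =
      -((x - Pi.single o (∑ i, x i)) ⬝ᵥ D *ᵥ (x - Pi.single o (∑ i, x i))) / 2 := by
  set s := ∑ i, x i with hs
  have hgram : x ⬝ᵥ gramOfSqDist D o *ᵥ x =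
      ((x ⬝ᵥ D.col o) * s + s * (D *ᵥ x) o - x ⬝ᵥ D *ᵥ x - s * s * D o o) / 2 := by
    have hmat : gramOfSqDist D o = (1 / 2 : ℝ) • (vecMulVec (D.col o) 1 + vecMulVec 1 (D.row o)
        - D - D o o • vecMulVec 1 1) := by
      ext i j
      simp only [gramOfSqDist, of_apply, Matrix.smul_apply, Matrix.sub_apply, Matrix.add_apply,
        vecMulVec_apply, col_apply, row_apply, Pi.one_apply, smul_eq_mul]
      ring
    have hrow : D.row o ⬝ᵥ x = (D *ᵥ x) o := rfl
    simp only [hmat, smul_mulVec, sub_mulVec, add_mulVec, vecMulVec_mulVec, dotProduct_smul,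
      dotProduct_sub, dotProduct_add, dotProduct_one, one_dotProduct, hrow, ← hs, smul_eq_mul,
      op_smul_eq_mul]
    ring
  have hquad : (x - Pi.single o s) ⬝ᵥ D *ᵥ (x - Pi.single o s) =
      x ⬝ᵥ D *ᵥ x - (x ⬝ᵥ D.col o) * s - s * (D *ᵥ x) o + s * s * D o o := by
    simp only [mulVec_sub, mulVec_single, op_smul_eq_smul, dotProduct_sub, sub_dotProduct,
      single_dotProduct, dotProduct_smul, col_apply, smul_eq_mul]
    ring
  rw [hgram, hquad]
  ring

theorem HasNegativeType.posSemidef_gramOfSqDist {D : Matrix ι ι ℝ} (hD : HasNegativeType D)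
    (hsymm : D.IsSymm) (o : ι) : (gramOfSqDist D o).PosSemidef := by
  classical
  refine .of_dotProduct_mulVec_nonneg ?_ fun x ↦ ?_
  · ext i j
    simp only [gramOfSqDist, conjTranspose_apply, of_apply, star_trivial, hsymm.apply]
    ring
  · have := hD (x - Pi.single o (∑ i, x i)) (by simp)
    rw [star_trivial, dotProduct_gramOfSqDist_mulVec]
    linarith

end NegativeType

open scoped ComplexOrder MatrixOrder in
theorem exists_gram_eq_of_posSemidef {ι 𝕜 : Type*} [RCLike 𝕜] [Fintype ι] {A : Matrix ι ι 𝕜}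
    (hA : A.PosSemidef) : ∃ v : ι → EuclideanSpace 𝕜 ι, gram 𝕜 v = A := by
  classical
  obtain ⟨B, rfl⟩ := CStarAlgebra.nonneg_iff_eq_star_mul_self.mp hA.nonneg
  refine ⟨fun i ↦ WithLp.toLp 2 (B.col i), ?_⟩
  rw [gram_eq_conjTranspose_mul (EuclideanSpace.basisFun ι 𝕜)]
  rfl

theorem nonempty_linearIsometry_of_finrank_le {𝕜 E F : Type*} [RCLike 𝕜]
    [NormedAddCommGroup E] [InnerProductSpace 𝕜 E] [FiniteDimensional 𝕜 E]
    [NormedAddCommGroup F] [InnerProductSpace 𝕜 F] [FiniteDimensional 𝕜 F]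
    (h : finrank 𝕜 E ≤ finrank 𝕜 F) : Nonempty (E →ₗᵢ[𝕜] F) := by
  let b := stdOrthonormalBasis 𝕜 E
  let w : Fin (finrank 𝕜 E) → F := stdOrthonormalBasis 𝕜 F ∘ Fin.castLE h
  have hw : Orthonormal 𝕜 w :=
    (stdOrthonormalBasis 𝕜 F).orthonormal.comp _ (Fin.castLE_injective h)
  refine ⟨(b.toBasis.constr 𝕜 w).isometryOfOrthonormal (v := b.toBasis) ?_ ?_⟩
  · simp
  · convert hw
    ext i
    simp

theorem exists_congruent_of_finrank_vectorSpan_le {ι V P F : Type*} [Finite ι]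
    [NormedAddCommGroup V] [InnerProductSpace ℝ V] [MetricSpace P] [NormedAddTorsor V P]
    [NormedAddCommGroup F] [InnerProductSpace ℝ F] [FiniteDimensional ℝ F] (p : ι → P)
    (h : finrank ℝ (vectorSpan ℝ (Set.range p)) ≤ finrank ℝ F) :
    ∃ q : ι → F, Congruent p q := by
  obtain _ | ⟨⟨o⟩⟩ := isEmpty_or_nonempty ι
  · exact ⟨isEmptyElim, isEmptyElim⟩
  obtain ⟨f⟩ := nonempty_linearIsometry_of_finrank_le h
  have hmem (i : ι) : p i -ᵥ p o ∈ vectorSpan ℝ (Set.range p) :=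
    vsub_mem_vectorSpan ℝ (Set.mem_range_self i) (Set.mem_range_self o)
  refine ⟨fun i ↦ f ⟨p i -ᵥ p o, hmem i⟩, Congruent.of_dist_eq fun i j ↦ ?_⟩
  simp [f.dist_map, Subtype.dist_eq]

theorem HasNegativeType.exists_norm_sub_sq_eq {ι F : Type*} [Fintype ι] [NormedAddCommGroup F]
    [InnerProductSpace ℝ F] [FiniteDimensional ℝ F] {D : Matrix ι ι ℝ} (hD : HasNegativeType D)
    (hsymm : D.IsSymm) (hdiag : ∀ i, D i i = 0) (hcard : Fintype.card ι ≤ finrank ℝ F + 1) :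
    ∃ q : ι → F, ∀ i j, ‖q i - q j‖ ^ 2 = D i j := by
  obtain _ | _ := isEmpty_or_nonempty ι
  · exact ⟨isEmptyElim, isEmptyElim⟩
  have o : ι := Classical.arbitrary ι
  obtain ⟨v, hv⟩ := exists_gram_eq_of_posSemidef (hD.posSemidef_gramOfSqDist hsymm o)
  have hinner (i j : ι) : inner ℝ (v i) (v j) = gramOfSqDist D o i j := congrFun₂ hv i j
  have hspan := (finrank_vectorSpan_range_add_one_le ℝ v).trans hcard
  obtain ⟨q, hq⟩ := exists_congruent_of_finrank_vectorSpan_le v (Nat.le_of_succ_le_succ hspan)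
  refine ⟨q, fun i j ↦ ?_⟩
  rw [← dist_eq_norm, ← hq.dist_eq, dist_eq_norm, norm_sub_sq_real, ← real_inner_self_eq_norm_sq,
    ← real_inner_self_eq_norm_sq, hinner, hinner, hinner]
  simp only [gramOfSqDist, of_apply, hdiag, hsymm.apply]
  ring

theorem HasStrictNegativeType.affineIndependent {ι V P : Type*} [Fintype ι]
    [NormedAddCommGroup V] [InnerProductSpace ℝ V] [MetricSpace P] [NormedAddTorsor V P]
    {q : ι → P} (hq : HasStrictNegativeType (of fun i j ↦ dist (q i) (q j) ^ 2)) :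
    AffineIndependent ℝ q := by
  rw [affineIndependent_iff_of_fintype]
  intro w hw hv
  have hinner := EuclideanGeometry.inner_weightedVSub q hw q hw
  have hzero : w ⬝ᵥ (of fun i j ↦ dist (q i) (q j) ^ 2) *ᵥ w = 0 := by
    simp only [hv, inner_zero_left] at hinner
    simp only [dotProduct_mulVec_self_eq_sum, of_apply, sq]
    linarith
  by_contra hne
  exact (hq w hw fun h0 ↦ hne (congrFun h0)).ne hzero

theorem dekster_wilker_embedding_general {ι E : Type*} [Fintype ι] [NormedAddCommGroup E]
    [InnerProductSpace ℝ E] [FiniteDimensional ℝ E] (hcard : Fintype.card ι ≤ finrank ℝ E + 1)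
    {ρ : ι → ι → ℝ} {a b : ℝ} (hsymm : ∀ i j, ρ i j = ρ j i) (hdiag : ∀ i, ρ i i = 0)
    (ha : 0 ≤ a) (hbound : ∀ i j, i ≠ j → a ≤ ρ i j ∧ ρ i j ≤ b)
    (hab : (Fintype.card ι - 2) * b ^ 2 < Fintype.card ι * a ^ 2) :
    (∃ q : ι → E, ∀ i j, ‖q i - q j‖ = ρ i j) ∧
      ∀ q : ι → E, (∀ i j, ‖q i - q j‖ = ρ i j) → AffineIndependent ℝ q := by
  have hstrict : HasStrictNegativeType (of fun i j ↦ ρ i j ^ 2) := by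
    refine hasStrictNegativeType_of_abs_sub_le (c := (a ^ 2 + b ^ 2) / 2)
      (h := (b ^ 2 - a ^ 2) / 2) (by simp [hdiag]) (fun i j hij ↦ ?_) (by linarith)
    obtain ⟨hlo, hhi⟩ := hbound i j hij
    have hlo_sq : a ^ 2 ≤ ρ i j ^ 2 := by gcongr
    have hhi_sq : ρ i j ^ 2 ≤ b ^ 2 := pow_le_pow_left₀ (ha.trans hlo) hhi 2
    rw [of_apply, abs_le]
    constructor <;> linarith
  have hnonneg (i j : ι) : 0 ≤ ρ i j := by
    obtain rfl | hij := eq_or_ne i j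
    · exact (hdiag i).ge
    · exact ha.trans (hbound i j hij).1
  constructor
  · obtain ⟨q, hq⟩ := hstrict.hasNegativeType.exists_norm_sub_sq_eq
      (IsSymm.ext fun i j ↦ by simp [hsymm i j]) (by simp [hdiag]) hcard
    exact ⟨q, fun i j ↦ (sq_eq_sq₀ (norm_nonneg _) (hnonneg i j)).mp (hq i j)⟩
  · intro q hq
    exact HasStrictNegativeType.affineIndependent (by simpa only [dist_eq_norm, hq] using hstrict)

theorem dekster_wilker_embedding
    (n : ℕ) (hn : 1 ≤ n) (ρ : Fin (n + 1) → Fin (n + 1) → ℝ)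
    (hsymm : ∀ i j, ρ i j = ρ j i)
    (hdiag : ∀ i, ρ i i = 0)
    (hbound : ∀ i j, i ≠ j → 1 ≤ ρ i j ∧ ρ i j ≤ 1 + 1 / (n + 1 : ℝ)) :
    (∃ q : Fin (n + 1) → EuclideanSpace ℝ (Fin n),
      ∀ i j, ‖q i - q j‖ = ρ i j) ∧
    (∀ q : Fin (n + 1) → EuclideanSpace ℝ (Fin n),
      (∀ i j, ‖q i - q j‖ = ρ i j) → AffineIndependent ℝ q) := by
  refine dekster_wilker_embedding_general (by simp) hsymm hdiag zero_le_one hbound ?_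
  rw [Fintype.card_fin]
  push_cast
  field_simp
  linarith
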